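/- Let R be a commutative ring. For every matrix M ∈ M_4(R), the Suslin matrix M·M* has length equal to det M; that is, writing M·M* = S_2(v,w), one has v·wᵀ = det M (equivalently, (M·M*)·(M·M*)‾ = (det M)·I_4). -/

import Mathlib

open Matrix

noncomputable section

/-- Reindexing equivalence `Fin (2 ^ n) ⊕ Fin (2 ^ n) ≃ Fin (2 ^ (n + 1))`. -/
def pow2Equiv (n : ℕ) : Fin (2 ^ n) ⊕ Fin (2 ^ n) ≃ Fin (2 ^ (n + 1)) :=
  finSumFinEquiv.trans (finCongr (by rw [pow_succ]; ring))

/-- The Suslin matrix `S_n(v, w)` of size `2 ^ n` associated to `v, w : Fin (n+1) → R`. -/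
def sus (R : Type) [CommRing R] : (n : ℕ) → (Fin (n + 1) → R) → (Fin (n + 1) → R) →
    Matrix (Fin (2 ^ n)) (Fin (2 ^ n)) R
  | 0, v, _ => v 0 • 1
  | n + 1, v, w =>
      Matrix.reindex (pow2Equiv n) (pow2Equiv n)
        (Matrix.fromBlocks (v 0 • 1) (sus R n (v ∘ Fin.succ) (w ∘ Fin.succ))
          (-(sus R n (w ∘ Fin.succ) (v ∘ Fin.succ))ᵀ) (w 0 • 1))

/-- The conjugate Suslin matrix `S̄_n(v, w) = S_n(w, v)ᵀ`. -/
def susBar (R : Type) [CommRing R] (n : ℕ) (v w : Fin (n + 1) → R) :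
    Matrix (Fin (2 ^ n)) (Fin (2 ^ n)) R :=
  (sus R n w v)ᵀ

/-- Suslin's matrices `J_n`. -/
def Jmat (R : Type) [CommRing R] : (n : ℕ) → Matrix (Fin (2 ^ n)) (Fin (2 ^ n)) R
  | 0 => 1
  | n + 1 =>
      if Even (n + 1) then
        Matrix.reindex (pow2Equiv n) (pow2Equiv n)
          (Matrix.fromBlocks (Jmat R n) 0 0 (-(Jmat R n)))
      else
        Matrix.reindex (pow2Equiv n) (pow2Equiv n)
          (Matrix.fromBlocks 0 (Jmat R n) (-(Jmat R n)) 0)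

/-- The involution `M ↦ M* = J_n · Mᵀ · J_nᵀ`. -/
def invol (R : Type) [CommRing R] (n : ℕ) (M : Matrix (Fin (2 ^ n)) (Fin (2 ^ n)) R) :
    Matrix (Fin (2 ^ n)) (Fin (2 ^ n)) R :=
  Jmat R n * Mᵀ * (Jmat R n)ᵀ

/-- `φ(v, w) = [[0, S_n(v,w)], [S̄_n(v,w), 0]]` (note the shift: vectors in `R^{n+1}`,
matrices of size `2 ^ (n + 1)`). -/
def phiMat (R : Type) [CommRing R] (n : ℕ) (v w : Fin (n + 1) → R) :
    Matrix (Fin (2 ^ (n + 1))) (Fin (2 ^ (n + 1))) R :=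
  Matrix.reindex (pow2Equiv n) (pow2Equiv n)
    (Matrix.fromBlocks 0 (sus R n v w) (susBar R n v w) 0)

/-- The set of Suslin matrices of size `2 ^ m`. -/
def SuslinSet (R : Type) [CommRing R] (m : ℕ) : Set (Matrix (Fin (2 ^ m)) (Fin (2 ^ m)) R) :=
  {S | ∃ v w : Fin (m + 1) → R, S = sus R m v w}

/-- The image of the hyperbolic space `R^{m+1} ⊕ R^{m+1}` inside the Clifford algebra
`M_{2^{m+1}}(R)`. -/
def PhiSet (R : Type) [CommRing R] (m : ℕ) :
    Set (Matrix (Fin (2 ^ (m + 1))) (Fin (2 ^ (m + 1))) R) :=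
  {x | ∃ v w : Fin (m + 1) → R, x = phiMat R m v w}

/-- The block diagonal matrix `diag(g₁, g₂)`. -/
def diagBlock (R : Type) [CommRing R] (m : ℕ)
    (g₁ g₂ : Matrix (Fin (2 ^ m)) (Fin (2 ^ m)) R) :
    Matrix (Fin (2 ^ (m + 1))) (Fin (2 ^ (m + 1))) R :=
  Matrix.reindex (pow2Equiv m) (pow2Equiv m) (Matrix.fromBlocks g₁ 0 0 g₂)

/-- `Spin_{2(m+1)}(R)`, as the set of pairs `(g₁, g₂)` such that `x = diag(g₁, g₂)`
satisfies `x · x* = 1` and conjugation by `x` maps the image of the hyperbolic space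
onto itself. -/
def SpinPair (R : Type) [CommRing R] (m : ℕ) :
    Set (Matrix (Fin (2 ^ m)) (Fin (2 ^ m)) R × Matrix (Fin (2 ^ m)) (Fin (2 ^ m)) R) :=
  {p | IsUnit p.1 ∧ IsUnit p.2 ∧
    diagBlock R m p.1 p.2 * invol R (m + 1) (diagBlock R m p.1 p.2) = 1 ∧
    (fun y => diagBlock R m p.1 p.2 * y * (diagBlock R m p.1 p.2)⁻¹) '' PhiSet R m
      = PhiSet R m}

/-- The group `G_m(R)` of `g ∈ GL_{2^m}(R)` such that `g · S · g*` is a Suslin matrix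
for every Suslin matrix `S`. -/
def GSet (R : Type) [CommRing R] (m : ℕ) : Set (Matrix (Fin (2 ^ m)) (Fin (2 ^ m)) R) :=
  {g | IsUnit g ∧ ∀ S ∈ SuslinSet R m, g * S * invol R m g ∈ SuslinSet R m}

/-- The group `SG_m(R)` of `g ∈ G_m(R)` preserving the length `l(S(v,w)) = v ⬝ᵥ w`. -/
def SGSet (R : Type) [CommRing R] (m : ℕ) : Set (Matrix (Fin (2 ^ m)) (Fin (2 ^ m)) R) :=
  {g | g ∈ GSet R m ∧ ∀ v w v' w' : Fin (m + 1) → R,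
    g * sus R m v w * invol R m g = sus R m v' w' → v' ⬝ᵥ w' = v ⬝ᵥ w}

/-- The hyperbolic quadratic form `q(v, w) = v ⬝ᵥ w` on `R^n ⊕ R^n`. -/
def hypForm (R : Type) [CommRing R] (n : ℕ) :
    QuadraticForm R ((Fin n → R) × (Fin n → R)) :=
  LinearMap.BilinMap.toQuadraticMap
    (LinearMap.mk₂ R (fun x y => x.1 ⬝ᵥ y.2)
      (fun x x' y => by simp [add_dotProduct])
      (fun c x y => by simp [smul_dotProduct])
      (fun x y y' => by simp [dotProduct_add])
      (fun x c y => by simp [dotProduct_smul]))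

/-- `E_i = S_m(e_i, 0)`. -/
def Emat (R : Type) [CommRing R] (m : ℕ) (i : Fin (m + 1)) :
    Matrix (Fin (2 ^ m)) (Fin (2 ^ m)) R :=
  sus R m (Pi.single i 1) 0

/-- `F_i = S_m(0, e_i)`. -/
def Fmat (R : Type) [CommRing R] (m : ℕ) (i : Fin (m + 1)) :
    Matrix (Fin (2 ^ m)) (Fin (2 ^ m)) R :=
  sus R m 0 (Pi.single i 1)



lemma blocks1 (R : Type) (A B C D : Matrix (Fin (2 ^ 0)) (Fin (2 ^ 0)) R) :
    Matrix.reindex (pow2Equiv 0) (pow2Equiv 0) (Matrix.fromBlocks A B C D) =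
      (!![A 0 0, B 0 0; C 0 0, D 0 0] : Matrix (Fin 2) (Fin 2) R) := by
  ext i j
  change Fin 2 at i j
  fin_cases i <;> fin_cases j <;> rfl

lemma blocks2 (R : Type) (A B C D : Matrix (Fin 2) (Fin 2) R) :
    Matrix.reindex (pow2Equiv 1) (pow2Equiv 1) (Matrix.fromBlocks A B C D) =
      (!![A 0 0, A 0 1, B 0 0, B 0 1; A 1 0, A 1 1, B 1 0, B 1 1;
        C 0 0, C 0 1, D 0 0, D 0 1; C 1 0, C 1 1, D 1 0, D 1 1] : Matrix (Fin 4) (Fin 4) R) := by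
  ext i j
  change Fin 4 at i j
  fin_cases i <;> fin_cases j <;> rfl

lemma sus1_eq (R : Type) [CommRing R] (v w : Fin 2 → R) :
    sus R 1 v w = (!![v 0, v 1; -w 1, w 0] : Matrix (Fin 2) (Fin 2) R) := by
  rw [sus, blocks1]
  simp [sus]

lemma sus2_eq (R : Type) [CommRing R] (v w : Fin 3 → R) :
    sus R 2 v w = (!![v 0, 0, v 1, v 2; 0, v 0, -w 2, w 1; -w 1, v 2, w 0, 0;
      -w 2, -v 1, 0, w 0] : Matrix (Fin 4) (Fin 4) R) := by
  rw [sus, sus1_eq, sus1_eq]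
  refine (blocks2 R (v 0 • 1) _ _ (w 0 • 1)).trans ?_
  have h (c : R) : c • (1 : Matrix (Fin 2) (Fin 2) R) = !![c, 0; 0, c] := by
    ext i j
    fin_cases i <;> fin_cases j <;> simp
  rw [h, h]
  ext i j
  fin_cases i <;> fin_cases j <;> simp

lemma J1_eq (R : Type) [CommRing R] :
    Jmat R 1 = (!![0, 1; -1, 0] : Matrix (Fin 2) (Fin 2) R) := by
  rw [Jmat, if_neg (by decide), blocks1]
  simp [Jmat]

lemma J2_eq (R : Type) [CommRing R] :
    Jmat R 2 = (!![0, 1, 0, 0; -1, 0, 0, 0; 0, 0, 0, -1; 0, 0, 1, 0] :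
      Matrix (Fin 4) (Fin 4) R) := by
  rw [Jmat, J1_eq, if_pos (by decide)]
  refine (blocks2 R _ _ _ _).trans ?_
  ext i j
  fin_cases i <;> fin_cases j <;> simp

lemma det4 (R : Type) [CommRing R] (M : Matrix (Fin 4) (Fin 4) R) : M.det =
    M 0 0 * (M 1 1 * (M 2 2 * M 3 3 - M 2 3 * M 3 2) - M 1 2 * (M 2 1 * M 3 3 - M 2 3 * M 3 1)
      + M 1 3 * (M 2 1 * M 3 2 - M 2 2 * M 3 1))
    - M 0 1 * (M 1 0 * (M 2 2 * M 3 3 - M 2 3 * M 3 2) - M 1 2 * (M 2 0 * M 3 3 - M 2 3 * M 3 0)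
      + M 1 3 * (M 2 0 * M 3 2 - M 2 2 * M 3 0))
    + M 0 2 * (M 1 0 * (M 2 1 * M 3 3 - M 2 3 * M 3 1) - M 1 1 * (M 2 0 * M 3 3 - M 2 3 * M 3 0)
      + M 1 3 * (M 2 0 * M 3 1 - M 2 1 * M 3 0))
    - M 0 3 * (M 1 0 * (M 2 1 * M 3 2 - M 2 2 * M 3 1) - M 1 1 * (M 2 0 * M 3 2 - M 2 2 * M 3 0)
      + M 1 2 * (M 2 0 * M 3 1 - M 2 1 * M 3 0)) := by
  have h00 : (0 : Fin 4).succAbove (0 : Fin 3) = 1 := by decide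
  have h01 : (0 : Fin 4).succAbove (1 : Fin 3) = 2 := by decide
  have h02 : (0 : Fin 4).succAbove (2 : Fin 3) = 3 := by decide
  have h10 : (1 : Fin 4).succAbove (0 : Fin 3) = 0 := by decide
  have h11 : (1 : Fin 4).succAbove (1 : Fin 3) = 2 := by decide
  have h12 : (1 : Fin 4).succAbove (2 : Fin 3) = 3 := by decide
  have h20 : (2 : Fin 4).succAbove (0 : Fin 3) = 0 := by decide
  have h21 : (2 : Fin 4).succAbove (1 : Fin 3) = 1 := by decide
  have h22 : (2 : Fin 4).succAbove (2 : Fin 3) = 3 := by decide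
  have h30 : (3 : Fin 4).succAbove (0 : Fin 3) = 0 := by decide
  have h31 : (3 : Fin 4).succAbove (1 : Fin 3) = 1 := by decide
  have h32 : (3 : Fin 4).succAbove (2 : Fin 3) = 2 := by decide
  have s0 : Fin.succ (0 : Fin 3) = 1 := rfl
  have s1 : Fin.succ (1 : Fin 3) = 2 := rfl
  have s2 : Fin.succ (2 : Fin 3) = 3 := rfl
  have v0 : ((0 : Fin 4) : ℕ) = 0 := rfl
  have v1 : ((1 : Fin 4) : ℕ) = 1 := rfl
  have v2 : ((2 : Fin 4) : ℕ) = 2 := rfl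
  have v3 : ((3 : Fin 4) : ℕ) = 3 := rfl
  rw [Matrix.det_succ_row_zero]
  simp only [Fin.sum_univ_four, Matrix.det_fin_three, Matrix.submatrix_apply, h00, h01, h02, h10,
    h11, h12, h20, h21, h22, h30, h31, h32, s0, s1, s2, v0, v1, v2, v3]
  ring

set_option maxHeartbeats 4000000 in
lemma main4 (R : Type) [CommRing R] (J M : Matrix (Fin 4) (Fin 4) R)
    (hJ : J = !![0, 1, 0, 0; -1, 0, 0, 0; 0, 0, 0, -1; 0, 0, 1, 0]) :
    ∃ v w : Fin 3 → R, M * (J * Mᵀ * Jᵀ) = !![v 0, 0, v 1, v 2; 0, v 0, -w 2, w 1;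
      -w 1, v 2, w 0, 0; -w 2, -v 1, 0, w 0] ∧ v ⬝ᵥ w = M.det := by
  subst hJ
  obtain ⟨N, hN⟩ : ∃ N, N = M * (!![0, 1, 0, 0; -1, 0, 0, 0; 0, 0, 0, -1; 0, 0, 1, 0] * Mᵀ *
    (!![0, 1, 0, 0; -1, 0, 0, 0; 0, 0, 0, -1; 0, 0, 1, 0] : Matrix (Fin 4) (Fin 4) R)ᵀ) := ⟨_, rfl⟩
  refine ⟨![N 0 0, N 0 2, N 0 3], ![N 2 2, -N 2 0, -N 3 0], ?_, ?_⟩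
  · rw [hN]
    ext i j
    fin_cases i <;> fin_cases j <;>
      simp [Matrix.mul_apply, Fin.sum_univ_four, Matrix.vecMul, dotProduct] <;> ring
  · have e0 (i : Fin 4) : N i 0 = M i 0 * M 1 1 - M i 1 * M 1 0 + M i 3 * M 1 2 - M i 2 * M 1 3 := by
      rw [hN]
      simp [Matrix.mul_apply, Fin.sum_univ_four, Matrix.vecMul, dotProduct]
      ring
    have e2 (i : Fin 4) :
        N i 2 = M i 1 * M 3 0 - M i 0 * M 3 1 + M i 2 * M 3 3 - M i 3 * M 3 2 := by
      rw [hN]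
      simp [Matrix.mul_apply, Fin.sum_univ_four, Matrix.vecMul, dotProduct]
      ring
    have e3 (i : Fin 4) :
        N i 3 = M i 0 * M 2 1 - M i 1 * M 2 0 + M i 3 * M 2 2 - M i 2 * M 2 3 := by
      rw [hN]
      simp [Matrix.mul_apply, Fin.sum_univ_four, Matrix.vecMul, dotProduct]
      ring
    have hd : ![N 0 0, N 0 2, N 0 3] ⬝ᵥ ![N 2 2, -N 2 0, -N 3 0] =
        N 0 0 * N 2 2 + N 0 2 * (-N 2 0) + N 0 3 * (-N 3 0) := by
      simp [dotProduct, Fin.sum_univ_three]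
    rw [hd, det4, e0, e0, e0, e2, e2, e3]
    ring

/-- for every `M ∈ M_4(R)`, the Suslin matrix `M·M*` has length `det M`:
`M·M* = S_2(v, w)` with `v ⬝ᵥ w = det M`. -/
theorem length_MMstar_eq_det (R : Type) [CommRing R]
    (M : Matrix (Fin (2 ^ 2)) (Fin (2 ^ 2)) R) :
    ∃ v w : Fin 3 → R, M * invol R 2 M = sus R 2 v w ∧ v ⬝ᵥ w = M.det := by
  obtain ⟨v, w, h1, h2⟩ := main4 R (Jmat R 2) M (J2_eq R)
  exact ⟨v, w, by rw [sus2_eq]; exact h1, h2⟩
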